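/- A binary word w is a primitive Christoffel word (i.e., w = w_{a,b} or w = W_{a,b} for some coprime nonnegative integers a, b not both zero) if and only if w is balanced and unbordered. -/

import Mathlib

/-- The lower Christoffel word `w_{a,b}`: the binary word of length `a+b` whose
`k`-th letter (1-based) is `⌊kb/(a+b)⌋ - ⌊(k-1)b/(a+b)⌋` (with `false = 0`, `true = 1`). -/
def lowerChristoffel (a b : ℕ) : List Bool :=
  (List.range (a + b)).map fun i => decide ((i + 1) * b / (a + b) ≠ i * b / (a + b))

/-- The upper Christoffel word `W_{a,b}`: the binary word of length `a+b` whose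
`k`-th letter is `⌈kb/(a+b)⌉ - ⌈(k-1)b/(a+b)⌉`. -/
def upperChristoffel (a b : ℕ) : List Bool :=
  (List.range (a + b)).map fun i =>
    decide (((i + 1) * b + (a + b) - 1) / (a + b) ≠ (i * b + (a + b) - 1) / (a + b))

/-- `p` is a period of `w`: `p` is positive and `w_i = w_{i+p}` for all valid indices. -/
def HasPeriod (w : List Bool) (p : ℕ) : Prop :=
  0 < p ∧ ∀ i, i + p < w.length → w.getD i false = w.getD (i + p) false

/-- A central word: a binary word with two coprime periods `p`, `q` and length `p + q - 2`. -/
def IsCentral (w : List Bool) : Prop :=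
  ∃ p q : ℕ, Nat.Coprime p q ∧ HasPeriod w p ∧ HasPeriod w q ∧ w.length + 2 = p + q

/-- A binary word is balanced if any two factors of the same length have numbers of `1`s
differing by at most `1`. -/
def BalancedWord (w : List Bool) : Prop :=
  ∀ u v : List Bool, u <:+: w → v <:+: w → u.length = v.length →
    |(u.count true : ℤ) - (v.count true : ℤ)| ≤ 1

/-- `w^m`: the `m`-th power of the word `w`. -/
def wpow (w : List Bool) (m : ℕ) : List Bool := (List.replicate m w).flatten

/-- A word is primitive if it is not a proper power. -/
def IsPrimitiveWord (w : List Bool) : Prop := ¬ ∃ (v : List Bool) (m : ℕ), 2 ≤ m ∧ w = wpow v m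

/-- A Lyndon word: a nonempty primitive word lexicographically strictly smaller than all
of its proper nonempty suffixes (for the order `0 < 1`, i.e. `false < true`). -/
def IsLyndonWord (w : List Bool) : Prop :=
  w ≠ [] ∧ IsPrimitiveWord w ∧
    ∀ u v : List Bool, w = u ++ v → u ≠ [] → v ≠ [] → List.Lex (· < ·) w v

/-- `p` is the minimal period of `w`. -/
def IsMinPeriod (w : List Bool) (p : ℕ) : Prop :=
  HasPeriod w p ∧ ∀ q : ℕ, HasPeriod w q → p ≤ q

/-- `u` is a factor of the infinite periodic word `w^ω`. -/
def IsOmegaFactor (u w : List Bool) : Prop := ∃ m : ℕ, u <:+: wpow w m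

/-- A primitive Christoffel word: a lower or upper Christoffel word `w_{a,b}` with
`gcd(a,b) = 1`. -/
def IsPrimitiveChristoffel (c : List Bool) : Prop :=
  ∃ a b : ℕ, Nat.Coprime a b ∧ (c = lowerChristoffel a b ∨ c = upperChristoffel a b)

/-- A word is unbordered if no nonempty proper prefix of it is also a suffix. -/
def Unbordered (w : List Bool) : Prop :=
  ∀ u : List Bool, u ≠ [] → u ≠ w → u <+: w → u <:+ w → False

/-!
Write `S k` for the number of `1`s among the first `k` letters of `w`, and `n` for its length.
If `w` is balanced and unbordered and its first letter is at most its last one, induction on `L`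
shows that the suffix of length `L` has exactly one more `1` than the prefix of length `L`, so that
balance leaves only the values `S L` and `S L + 1` for the factors of length `L`. Cyclically, `w`
has `n` factors of length `L`, those that wrap around being complements of factors of length
`n - L`, and together they contain `L * S n` ones. As both values occur,
`n * S L < L * S n < n * (S L + 1)`: this determines `S L` as a floor and forces `n` and `S n` to be
coprime. Exchanging the two letters settles the case where the first letter exceeds the last.
-/

/-- The number of `1`s in the prefix of length `k`, that is, the height after `k` steps of the
lattice path coded by `w`; it is an integer so that factors can be counted by differences. -/
def prefixOnes (w : List Bool) (k : ℕ) : ℤ := (w.take k).count true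

@[simp]
lemma prefixOnes_zero (w : List Bool) : prefixOnes w 0 = 0 := by simp [prefixOnes]

@[simp]
lemma prefixOnes_length (w : List Bool) : prefixOnes w w.length = w.count true := by
  simp [prefixOnes]

lemma prefixOnes_succ {w : List Bool} {k : ℕ} (hk : k < w.length) :
    prefixOnes w (k + 1) = prefixOnes w k + w[k].toNat := by
  unfold prefixOnes
  rw [List.take_succ_eq_append_getElem hk, List.count_append]
  cases w[k] <;> simp

lemma prefixOnes_one {w : List Bool} (hw : w ≠ []) : prefixOnes w 1 = (w.head hw).toNat := by
  simp [prefixOnes_succ (List.length_pos_of_ne_nil hw), List.head_eq_getElem]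

lemma prefixOnes_length_sub_one_add_getLast {w : List Bool} (hw : w ≠ []) :
    prefixOnes w (w.length - 1) + (w.getLast hw).toNat = prefixOnes w w.length := by
  have hpos := List.length_pos_of_ne_nil hw
  have h := prefixOnes_succ (Nat.sub_one_lt_of_lt hpos)
  rw [Nat.sub_add_cancel hpos, ← List.getLast_eq_getElem hw] at h
  exact h.symm

lemma count_take_drop (w : List Bool) (i L : ℕ) :
    (((w.drop i).take L).count true : ℤ) = prefixOnes w (i + L) - prefixOnes w i := by
  simp [prefixOnes, List.take_add]

lemma ext_prefixOnes {u v : List Bool} (hlen : u.length = v.length)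
    (h : ∀ k ≤ u.length, prefixOnes u k = prefixOnes v k) : u = v := by
  refine List.ext_getElem hlen fun k hu hv => ?_
  have hk := h k hu.le
  have hk' := h (k + 1) hu
  rw [prefixOnes_succ hu, prefixOnes_succ hv] at hk'
  have htoNat : u[k].toNat = v[k].toNat := by lia
  exact Bool.eq_iff_iff.mpr (by rw [← Bool.toNat_eq_one, htoNat, Bool.toNat_eq_one])

lemma prefixOnes_map_not {w : List Bool} {k : ℕ} (hk : k ≤ w.length) :
    prefixOnes (w.map not) k = k - prefixOnes w k := by
  have hfalse : ((w.map not).take k).count true = (w.take k).count false := by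
    rw [← List.map_take]
    exact List.count_map_of_injective (w.take k) not Bool.not_injective false
  have hadd := List.count_false_add_count_true (w.take k)
  rw [List.length_take_of_le hk] at hadd
  simp only [prefixOnes, hfalse]
  lia

lemma balancedWord_iff_prefixOnes {w : List Bool} :
    BalancedWord w ↔ ∀ i j L : ℕ, i + L ≤ w.length → j + L ≤ w.length →
      |(prefixOnes w (i + L) - prefixOnes w i) - (prefixOnes w (j + L) - prefixOnes w j)| ≤ 1 := by
  constructor
  · intro h i j L hi hj
    have hinfix (k : ℕ) : (w.drop k).take L <:+: w :=
      (List.take_prefix _ _).isInfix.trans (List.drop_suffix _ _).isInfix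
    simpa only [count_take_drop] using h _ _ (hinfix i) (hinfix j)
      (by simp only [List.length_take, List.length_drop]; lia)
  · rintro h u v ⟨p, s, rfl⟩ ⟨p', s', hv⟩ huv
    have hu' : u = ((p ++ u ++ s).drop p.length).take u.length := by simp
    have hv' : v = ((p ++ u ++ s).drop p'.length).take u.length := by simp [← hv, huv]
    have hlen := congrArg List.length hv
    simp only [List.length_append] at hlen
    have hcount := h p.length p'.length u.length (by simp) (by simp only [List.length_append]; lia)
    rwa [← count_take_drop, ← count_take_drop, ← hu', ← hv'] at hcount

lemma unbordered_iff_take_ne_drop {w : List Bool} :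
    Unbordered w ↔ ∀ L M : ℕ, 0 < L → 0 < M → L + M = w.length → w.take L ≠ w.drop M := by
  constructor
  · intro h L M hL hM hLM hborder
    have hlen : (w.take L).length = L := List.length_take_of_le (by lia)
    refine h (w.take L) ?_ ?_ (List.take_prefix _ _) (hborder ▸ List.drop_suffix _ _)
    · exact List.ne_nil_of_length_pos (by lia)
    · exact fun heq => by rw [heq] at hlen; lia
  · intro h u hu huw hprefix hsuffix
    have hlt : u.length < w.length :=
      lt_of_le_of_ne hprefix.length_le fun heq => huw (hprefix.eq_of_length heq)
    apply h u.length (w.length - u.length) (List.length_pos_of_ne_nil hu) (by lia) (by lia)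
    rw [← List.prefix_iff_eq_take.mp hprefix, ← List.suffix_iff_eq_drop.mp hsuffix]

lemma take_eq_drop_iff_prefixOnes {w : List Bool} {L M : ℕ} (h : L + M = w.length) :
    w.take L = w.drop M ↔
      ∀ i ≤ L, prefixOnes w (M + i) = prefixOnes w M + prefixOnes w i := by
  have htake {i : ℕ} (hi : i ≤ L) : prefixOnes (w.take L) i = prefixOnes w i := by
    simp [prefixOnes, List.take_take, hi]
  have hdrop (i : ℕ) : prefixOnes (w.drop M) i = prefixOnes w (M + i) - prefixOnes w M :=
    count_take_drop w M i
  constructor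
  · intro heq i hi
    linarith [htake hi, hdrop i, congrArg (prefixOnes · i) heq]
  · intro hones
    have hlen : (w.take L).length = (w.drop M).length := by
      simp only [List.length_take, List.length_drop]
      lia
    refine ext_prefixOnes hlen fun i hi => ?_
    have hi' : i ≤ L := hi.trans (List.length_take_le _ _)
    linarith [htake hi', hdrop i, hones i hi']

lemma unbordered_iff_prefixOnes {w : List Bool} :
    Unbordered w ↔ ∀ L M : ℕ, 0 < L → 0 < M → L + M = w.length →
      ∃ i ≤ L, prefixOnes w (M + i) ≠ prefixOnes w M + prefixOnes w i := by
  rw [unbordered_iff_take_ne_drop]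
  refine forall₅_congr fun L M _ _ hLM => ?_
  rw [Ne, take_eq_drop_iff_prefixOnes hLM]
  push Not
  rfl

lemma BalancedWord.map_not {w : List Bool} (h : BalancedWord w) : BalancedWord (w.map not) := by
  rw [balancedWord_iff_prefixOnes] at h ⊢
  intro i j L hi hj
  rw [List.length_map] at hi hj
  rw [prefixOnes_map_not hi, prefixOnes_map_not hj, prefixOnes_map_not (by lia),
    prefixOnes_map_not (by lia), abs_sub_comm]
  convert h i j L hi hj using 2
  push_cast
  ring

lemma Unbordered.map_not {w : List Bool} (h : Unbordered w) : Unbordered (w.map not) := by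
  rw [unbordered_iff_prefixOnes] at h ⊢
  intro L M hL hM hLM
  rw [List.length_map] at hLM
  obtain ⟨i, hi, hne⟩ := h L M hL hM hLM
  refine ⟨i, hi, fun heq => hne ?_⟩
  rw [prefixOnes_map_not (by lia), prefixOnes_map_not (by lia),
    prefixOnes_map_not (by lia)] at heq
  push_cast at heq
  linarith

lemma succ_mul_div_eq_or {b n : ℕ} (hn : 0 < n) (hb : b ≤ n) (i : ℕ) :
    (i + 1) * b / n = i * b / n ∨ (i + 1) * b / n = i * b / n + 1 := by
  have hlower : i * b / n ≤ (i + 1) * b / n := Nat.div_le_div_right (by lia)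
  have hupper : (i + 1) * b / n ≤ (i * b + n) / n := Nat.div_le_div_right (by lia)
  rw [Nat.add_div_right _ hn] at hupper
  lia

@[simp]
lemma length_lowerChristoffel (a b : ℕ) : (lowerChristoffel a b).length = a + b := by
  simp [lowerChristoffel]

lemma prefixOnes_lowerChristoffel {a b k : ℕ} (hk : k ≤ a + b) :
    prefixOnes (lowerChristoffel a b) k = (k * b / (a + b) : ℕ) := by
  induction k with
  | zero => simp
  | succ k ih =>
    rw [prefixOnes_succ (by simpa using hk), ih (by lia)]
    rcases succ_mul_div_eq_or (by lia) (Nat.le_add_left b a) k with h | h <;>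
      simp [lowerChristoffel, h]

lemma mul_prefixOnes_lowerChristoffel_le {a b k : ℕ} (hk : k ≤ a + b) :
    (a + b : ℤ) * prefixOnes (lowerChristoffel a b) k ≤ k * b := by
  rw [prefixOnes_lowerChristoffel hk]
  exact_mod_cast Nat.mul_div_le (k * b) (a + b)

lemma lt_mul_prefixOnes_lowerChristoffel_add_one {a b k : ℕ} (hn : 0 < a + b) (hk : k ≤ a + b) :
    (k * b : ℤ) < (a + b) * (prefixOnes (lowerChristoffel a b) k + 1) := by
  rw [prefixOnes_lowerChristoffel hk]
  exact_mod_cast Nat.lt_mul_div_succ (k * b) hn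

lemma balancedWord_lowerChristoffel (a b : ℕ) : BalancedWord (lowerChristoffel a b) := by
  rw [balancedWord_iff_prefixOnes]
  simp only [length_lowerChristoffel]
  intro i j L hi hj
  rcases Nat.eq_zero_or_pos (a + b) with hn | hn
  · obtain ⟨rfl, rfl⟩ : i = j ∧ L = 0 := by lia
    simp
  set S := prefixOnes (lowerChristoffel a b)
  have key {i j : ℕ} (hi : i + L ≤ a + b) (hj : j + L ≤ a + b) :
      S (i + L) - S i - (S (j + L) - S j) ≤ 1 := by
    refine Int.le_of_lt_add_one ?_
    refine lt_of_mul_lt_mul_left ?_ (by positivity : (0 : ℤ) ≤ a + b)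
    have h₁ := mul_prefixOnes_lowerChristoffel_le hi
    have h₂ := lt_mul_prefixOnes_lowerChristoffel_add_one hn (k := i) (by lia)
    have h₃ := lt_mul_prefixOnes_lowerChristoffel_add_one hn hj
    have h₄ := mul_prefixOnes_lowerChristoffel_le (a := a) (b := b) (k := j) (by lia)
    push_cast at h₁ h₃
    linarith
  rw [abs_le]
  constructor <;> linarith [key hi hj, key hj hi]

-- `L * b` and `M * b` add up to a multiple of `n = a + b`, so their floors after division by `n`
-- add up to `b` only if `n` divides both.
lemma unbordered_lowerChristoffel {a b : ℕ} (h : a.Coprime b) :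
    Unbordered (lowerChristoffel a b) := by
  rw [unbordered_iff_prefixOnes]
  simp only [length_lowerChristoffel]
  intro L M hL hM hLM
  refine ⟨L, le_rfl, fun hadd => ?_⟩
  have htotal : prefixOnes (lowerChristoffel a b) (M + L) = b := by
    rw [prefixOnes_lowerChristoffel (by lia), show M + L = a + b by lia,
      Nat.mul_div_cancel_left b (by lia)]
  have hle_L := mul_prefixOnes_lowerChristoffel_le (a := a) (b := b) (k := L) (by lia)
  have hle_M := mul_prefixOnes_lowerChristoffel_le (a := a) (b := b) (k := M) (by lia)
  have hLM' : (L + M : ℤ) = a + b := by exact_mod_cast hLM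
  have heq : (L * b : ℤ) = (a + b) * prefixOnes (lowerChristoffel a b) L := by
    refine le_antisymm ?_ hle_L
    linear_combination hle_M + (b : ℤ) * hLM' + (a + b : ℤ) * (hadd - htotal)
  have hdvd : a + b ∣ L * b := by
    have hdvd_int : ((a + b : ℕ) : ℤ) ∣ ((L * b : ℕ) : ℤ) := ⟨_, by push_cast; exact heq⟩
    exact_mod_cast hdvd_int
  have hcop : (a + b).Coprime b := by simpa using h
  exact Nat.not_dvd_of_pos_of_lt hL (by lia) (hcop.dvd_of_dvd_mul_right hdvd)

lemma floor_add_ceil_eq {a b : ℕ} (hn : 0 < a + b) (k : ℕ) :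
    k * a / (a + b) + (k * b + (a + b) - 1) / (a + b) = k := by
  have hle : k * a / (a + b) ≤ k := Nat.div_le_of_le_mul (by lia)
  have hceil : k * b + (a + b) - 1 = (a + b) * (k + 1) - (k * a + 1) := by lia
  rw [hceil, Nat.mul_sub_div _ _ _ (by lia)]
  lia

lemma map_not_lowerChristoffel (a b : ℕ) :
    (lowerChristoffel b a).map not = upperChristoffel a b := by
  unfold lowerChristoffel upperChristoffel
  rw [List.map_map, add_comm b a]
  refine List.map_congr_left fun i hi => ?_
  have hn : 0 < a + b := (Nat.zero_le i).trans_lt (List.mem_range.mp hi)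
  have h := floor_add_ceil_eq hn i
  have h' := floor_add_ceil_eq hn (i + 1)
  rw [Function.comp_apply, ← decide_not, decide_eq_decide]
  rcases succ_mul_div_eq_or hn (Nat.le_add_right a b) i with hstep | hstep <;> lia

/-- Every proper nonempty prefix of `w` has exactly one `1` fewer than the suffix of the same
length, the suffix of length `L` being what follows the prefix of length `M`. Among nonempty
balanced words this property singles out the primitive lower Christoffel words. -/
def PrefixDeficient (w : List Bool) : Prop :=
  ∀ L M : ℕ, 0 < L → 0 < M → L + M = w.length →
    prefixOnes w w.length = prefixOnes w L + prefixOnes w M + 1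

lemma BalancedWord.prefixOnes_add_bounds {w : List Bool} (hb : BalancedWord w) {L M i : ℕ}
    (hLM : L + M = w.length)
    (hdef : prefixOnes w w.length = prefixOnes w L + prefixOnes w M + 1)
    (hi : i + L ≤ w.length) :
    prefixOnes w i + prefixOnes w L ≤ prefixOnes w (i + L) ∧
      prefixOnes w (i + L) ≤ prefixOnes w i + prefixOnes w L + 1 := by
  rw [balancedWord_iff_prefixOnes] at hb
  have hprefix := abs_le.mp (hb i 0 L hi (by lia))
  have hsuffix := abs_le.mp (hb i M L hi (by lia))
  rw [zero_add, prefixOnes_zero] at hprefix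
  rw [show M + L = w.length by lia] at hsuffix
  lia

lemma BalancedWord.prefixOnes_excess_bounds {w : List Bool} (hb : BalancedWord w) {i j M : ℕ}
    (hijM : i + j + M = w.length)
    (hdef_i : prefixOnes w w.length = prefixOnes w i + prefixOnes w (M + j) + 1)
    (hdef_j : prefixOnes w w.length = prefixOnes w j + prefixOnes w (M + i) + 1) :
    prefixOnes w M + prefixOnes w i ≤ prefixOnes w (M + i) ∧
      prefixOnes w (M + i) + prefixOnes w (i + j) ≤ prefixOnes w w.length + prefixOnes w i := by
  have hlower := (hb.prefixOnes_add_bounds (i := M) (by lia) hdef_i (by lia)).1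
  have hupper := (hb.prefixOnes_add_bounds (i := i) (by lia) hdef_j (by lia)).2
  exact ⟨hlower, by linarith⟩

-- If the suffix of length `L` does not have more `1`s than the prefix, its excess over the prefix
-- after `i` letters is zero for each `i`, so the two coincide.
lemma prefixDeficient_of_balanced_of_unbordered {w : List Bool} (hb : BalancedWord w)
    (hu : Unbordered w) (hw : w ≠ []) (hends : w.head hw ≤ w.getLast hw) :
    PrefixDeficient w := by
  intro L
  induction L using Nat.strong_induction_on with
  | _ L ih =>
  intro M hL hM hLM
  have hexcess : ∀ i, 0 < i → i < L → prefixOnes w M + prefixOnes w i ≤ prefixOnes w (M + i) ∧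
      prefixOnes w (M + i) + prefixOnes w L ≤ prefixOnes w w.length + prefixOnes w i := by
    intro i hi hiL
    obtain ⟨j, rfl⟩ := Nat.exists_eq_add_of_le hiL.le
    exact hb.prefixOnes_excess_bounds hLM (ih i hiL (M + j) hi (by lia) (by lia))
      (ih j (by lia) (M + i) (by lia) (by lia) (by lia))
  have hge : prefixOnes w L + prefixOnes w M ≤ prefixOnes w w.length := by
    rcases Nat.lt_or_ge 1 L with hL1 | hL1
    · linarith [(hexcess 1 one_pos hL1).1, (hexcess 1 one_pos hL1).2]
    · obtain rfl : L = 1 := by lia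
      rw [show M = w.length - 1 by lia, ← prefixOnes_length_sub_one_add_getLast hw,
        prefixOnes_one hw, add_comm]
      gcongr
      exact Bool.toNat_le_toNat hends
  have hle : prefixOnes w w.length ≤ prefixOnes w L + prefixOnes w M + 1 := by
    have h := abs_le.mp (balancedWord_iff_prefixOnes.mp hb M 0 L (by lia) (by lia))
    rw [show M + L = w.length by lia, zero_add, prefixOnes_zero] at h
    lia
  refine hle.antisymm (Int.add_one_le_of_lt (hge.lt_of_ne fun heq => ?_))
  obtain ⟨i, hi, hne⟩ := unbordered_iff_prefixOnes.mp hu L M hL hM hLM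
  apply hne
  rcases Nat.eq_zero_or_pos i with rfl | hpos
  · simp
  rcases hi.lt_or_eq with hlt | rfl
  · linarith [(hexcess i hpos hlt).1, (hexcess i hpos hlt).2]
  · rw [show M + i = w.length by lia]
    linarith

lemma sum_range_sub_comm {G : Type*} [AddCommGroup G] (f : ℕ → G) (L M : ℕ) :
    ∑ i ∈ Finset.range M, (f (L + i) - f i) = ∑ j ∈ Finset.range L, (f (M + j) - f j) := by
  have h := Finset.sum_range_add f L M
  rw [add_comm L M, Finset.sum_range_add f M L] at h
  rw [Finset.sum_sub_distrib, Finset.sum_sub_distrib, sub_eq_sub_iff_add_eq_add, add_comm, ← h,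
    add_comm]

-- This counts `1`s in all cyclic factors of length `L`, with each factor that wraps around replaced
-- by its complement, of length `M`; the prefix of length `L` makes the inequality strict.
lemma PrefixDeficient.mul_prefixOnes_lt_mul {w : List Bool} (hd : PrefixDeficient w)
    (hb : BalancedWord w) {L M : ℕ} (hL : 0 < L) (hM : 0 < M) (hLM : L + M = w.length) :
    L * prefixOnes w M < M * (prefixOnes w L + 1) := by
  have hdef_L := hd L M hL hM hLM
  have hdef_M := hd M L hM hL (by lia)
  calc L * prefixOnes w M
      = ∑ _j ∈ Finset.range L, prefixOnes w M := by simp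
    _ ≤ ∑ j ∈ Finset.range L, (prefixOnes w (M + j) - prefixOnes w j) := by
        refine Finset.sum_le_sum fun j hj => ?_
        have hjL := Finset.mem_range.mp hj
        have h := (hb.prefixOnes_add_bounds (i := j) (by lia) hdef_M (by lia)).1
        rw [add_comm j M] at h
        linarith
    _ = ∑ i ∈ Finset.range M, (prefixOnes w (L + i) - prefixOnes w i) :=
        (sum_range_sub_comm _ L M).symm
    _ < ∑ i ∈ Finset.range M, (prefixOnes w L + 1) := by
        refine Finset.sum_lt_sum (fun i hi => ?_) ⟨0, by simpa using hM, by simp⟩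
        have hiM := Finset.mem_range.mp hi
        have h := (hb.prefixOnes_add_bounds (i := i) (by lia) hdef_L (by lia)).2
        rw [add_comm i L] at h
        linarith
    _ = M * (prefixOnes w L + 1) := by simp

lemma PrefixDeficient.length_mul_prefixOnes_bounds {w : List Bool} (hd : PrefixDeficient w)
    (hb : BalancedWord w) {k : ℕ} (hk : 0 < k) (hkn : k < w.length) :
    w.length * prefixOnes w k < k * w.count true ∧
      (k * w.count true : ℤ) < w.length * (prefixOnes w k + 1) := by
  obtain ⟨M, hM⟩ := Nat.exists_eq_add_of_lt hkn
  have hdef := hd k (M + 1) hk M.succ_pos hM.symm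
  have hlt := hd.mul_prefixOnes_lt_mul hb hk M.succ_pos hM.symm
  have hlt' := hd.mul_prefixOnes_lt_mul hb M.succ_pos hk (by lia)
  rw [prefixOnes_length] at hdef
  have hM' : (w.length : ℤ) = k + (M + 1 : ℕ) := by exact_mod_cast hM
  have hones : prefixOnes w (M + 1) = w.count true - prefixOnes w k - 1 := by linarith
  rw [hones] at hlt hlt'
  rw [hM']
  constructor <;> linarith

lemma coprime_of_forall_not_dvd_mul {n b : ℕ} (hn : 0 < n)
    (h : ∀ k, 0 < k → k < n → ¬ n ∣ k * b) : n.Coprime b := by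
  have hdvd : n ∣ n / n.gcd b * b := by
    rw [Nat.div_mul_right_comm (Nat.gcd_dvd_left n b), Nat.mul_div_assoc _ (Nat.gcd_dvd_right n b)]
    exact dvd_mul_right _ _
  have hpos : 0 < n / n.gcd b := Nat.div_gcd_pos_of_pos_left b hn
  by_contra hcop
  have hgcd : 1 < n.gcd b := lt_of_le_of_ne (Nat.gcd_pos_of_pos_left b hn) (Ne.symm hcop)
  exact h _ hpos (Nat.div_lt_self hn hgcd) hdvd

lemma PrefixDeficient.coprime_count {w : List Bool} (hd : PrefixDeficient w)
    (hb : BalancedWord w) (hw : w ≠ []) : (w.count false).Coprime (w.count true) := by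
  suffices h : w.length.Coprime (w.count true) by
    rwa [← List.count_false_add_count_true, Nat.coprime_add_self_left] at h
  refine coprime_of_forall_not_dvd_mul (List.length_pos_of_ne_nil hw) fun k hk hkn => ?_
  rintro ⟨c, hc⟩
  have hbounds := hd.length_mul_prefixOnes_bounds hb hk hkn
  have hc' : (k * w.count true : ℤ) = w.length * c := by exact_mod_cast hc
  rw [hc'] at hbounds
  have hlower : prefixOnes w k < c := lt_of_mul_lt_mul_left hbounds.1 (by positivity)
  have hupper : (c : ℤ) < prefixOnes w k + 1 := lt_of_mul_lt_mul_left hbounds.2 (by positivity)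
  lia

lemma PrefixDeficient.eq_lowerChristoffel {w : List Bool} (hd : PrefixDeficient w)
    (hb : BalancedWord w) : w = lowerChristoffel (w.count false) (w.count true) := by
  have hlen : w.count false + w.count true = w.length := List.count_false_add_count_true w
  refine ext_prefixOnes (by simp [hlen]) fun k hk => ?_
  rw [prefixOnes_lowerChristoffel (by lia), hlen]
  rcases Nat.eq_zero_or_pos k with rfl | hpos
  · simp
  rcases hk.lt_or_eq with hlt | rfl
  · have hbounds := hd.length_mul_prefixOnes_bounds hb hpos hlt
    push_cast
    refine (Int.ediv_eq_iff_of_pos (by lia)).mpr ⟨?_, ?_⟩ |>.symm <;> linarith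
  · rw [prefixOnes_length, Nat.mul_div_cancel_left _ hpos]

/-- A (nonempty) binary word is a primitive Christoffel word iff it is
balanced and unbordered. -/
theorem stmt4 (w : List Bool) (hw : w ≠ []) :
    IsPrimitiveChristoffel w ↔ (BalancedWord w ∧ Unbordered w) := by
  constructor
  · rintro ⟨a, b, hcop, rfl | rfl⟩
    · exact ⟨balancedWord_lowerChristoffel a b, unbordered_lowerChristoffel hcop⟩
    · rw [← map_not_lowerChristoffel]
      exact ⟨(balancedWord_lowerChristoffel b a).map_not,
        (unbordered_lowerChristoffel hcop.symm).map_not⟩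
  · rintro ⟨hb, hu⟩
    rcases le_total (w.head hw) (w.getLast hw) with hends | hends
    · have hd := prefixDeficient_of_balanced_of_unbordered hb hu hw hends
      exact ⟨_, _, hd.coprime_count hb hw, .inl (hd.eq_lowerChristoffel hb)⟩
    · have hw' : w.map not ≠ [] := by simpa using hw
      have hends' : (w.map not).head hw' ≤ (w.map not).getLast hw' := by
        rw [List.head_map, List.getLast_map]
        exact compl_le_compl hends
      have hd := prefixDeficient_of_balanced_of_unbordered hb.map_not hu.map_not hw' hends'
      refine ⟨_, _, (hd.coprime_count hb.map_not hw').symm, .inr ?_⟩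
      rw [← map_not_lowerChristoffel, ← hd.eq_lowerChristoffel hb.map_not]
      simp [Function.comp_def]
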